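/- Let d be a positive integer with ν₂(d) ≥ 3 and set δ = ν₂(d) − 2. Then for every positive integer n, ν₂(W_d(n)) = 3·s₂(n) + δ if and only if, in the binary expansion of n, all of the 1s come before all of the 0s; equivalently, n = 2^a·(2^b − 1) for some nonnegative integer a and positive integer b. -/

import Mathlib

/-- `Wstar d n` is the number of Abelian squares: the sum over all tuples
`(x₁,…,x_d)` of nonnegative integers summing to `n` of the square of the
multinomial coefficient `n!/(x₁!⋯x_d!)`. -/
def Wstar (d n : ℕ) : ℕ :=
  ∑ x ∈ Finset.Nat.antidiagonalTuple d n, (Nat.multinomial Finset.univ x) ^ 2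

/-- `W d n` is the number of `2n`-step closed walks at the origin in `ℤ^d`. -/
def W (d n : ℕ) : ℕ := Nat.choose (2 * n) n * Wstar d n

/-- `s2 n` is the number of ones in the binary expansion of `n`. -/
def s2 (n : ℕ) : ℕ := (Nat.digits 2 n).sum

/-!
Let `I = ∑ Xⁿ / (n!)²`, so that `I ^ d = ∑ Wstar d n Xⁿ / (n!)²`, and write `log I` as
`∑ ℓₙ Xⁿ / (n!)²`. With `θ = X d/dX`, the Bessel equation `θ²I = X I` becomes a Riccati equation
for `θ I / I`, which reads `ℓₙ = -∑ pascalProd i j * (ℓᵢ * ℓⱼ)` over `i + j = n ≥ 2`, and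
`θ (I ^ d) = d (θ I / I) I ^ d` becomes a recursion for `Wstar d n` with the `ℓᵢ` as coefficients.

Claim: `2 ^ (2 * s2 n - 2)` divides `ℓₙ`, with odd quotient exactly when the ones of `n` precede its
zeros. Pairing `(i, j)` with `(j, i)` gives the off-diagonal terms of the Riccati recursion a factor
`2`. By Kummer's theorem such a pair then has an odd quotient only for `i = 2 ^ ν₂(n)` and
`j = n - i`, with the ones of `n` preceding its zeros, while a diagonal term has one only when `n`
is a power of two. In the recursion for `Wstar d n` the term `d * ℓₙ` dominates once `8 ∣ d`.
-/

section LeadingDigit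

variable {p e f : ℕ} {x y : ℤ} {c c' : ZMod p}

/-- `x ≡ c * p ^ e` modulo `p ^ (e + 1)`: the integer `x` is divisible by `p ^ e`, and `c` is its
base-`p` digit at position `e`. The digit may be `0`, so `e` is only a lower bound for the
valuation of `x`, attained exactly when `c ≠ 0`. -/
def HasLeadingDigit (p e : ℕ) (x : ℤ) (c : ZMod p) : Prop :=
  ∃ u : ℤ, x = p ^ e * u ∧ (u : ZMod p) = c

namespace HasLeadingDigit

theorem zero (p e : ℕ) : HasLeadingDigit p e 0 0 :=
  ⟨0, by simp, by simp⟩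

theorem mul (hx : HasLeadingDigit p e x c) (hy : HasLeadingDigit p f y c') :
    HasLeadingDigit p (e + f) (x * y) (c * c') := by
  obtain ⟨u, rfl, rfl⟩ := hx
  obtain ⟨v, rfl, rfl⟩ := hy
  exact ⟨u * v, by ring, by push_cast; rfl⟩

theorem add (hx : HasLeadingDigit p e x c) (hy : HasLeadingDigit p e y c') :
    HasLeadingDigit p e (x + y) (c + c') := by
  obtain ⟨u, rfl, rfl⟩ := hx
  obtain ⟨v, rfl, rfl⟩ := hy
  exact ⟨u + v, by ring, by push_cast; rfl⟩

theorem neg (hx : HasLeadingDigit p e x c) : HasLeadingDigit p e (-x) (-c) := by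
  obtain ⟨u, rfl, rfl⟩ := hx
  exact ⟨-u, by ring, by push_cast; rfl⟩

theorem sum {ι : Type*} {s : Finset ι} {x : ι → ℤ} {c : ι → ZMod p}
    (h : ∀ i ∈ s, HasLeadingDigit p e (x i) (c i)) :
    HasLeadingDigit p e (∑ i ∈ s, x i) (∑ i ∈ s, c i) := by
  induction s using Finset.cons_induction with
  | empty => exact zero p e
  | cons i s hi ih =>
    rw [Finset.sum_cons, Finset.sum_cons]
    exact (h i (s.mem_cons_self i)).add (ih fun j hj => h j (Finset.mem_cons_of_mem hj))

theorem of_le (hx : HasLeadingDigit p e x c) (hfe : f ≤ e) :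
    HasLeadingDigit p f x (if e = f then c else 0) := by
  obtain ⟨k, rfl⟩ := Nat.exists_eq_add_of_le hfe
  obtain ⟨u, rfl, rfl⟩ := hx
  refine ⟨p ^ k * u, by ring, ?_⟩
  rcases k with _ | k <;> simp

theorem padicValNat_eq_iff [Fact p.Prime] {n : ℕ} (h : HasLeadingDigit p e n c) (he : e ≠ 0) :
    padicValNat p n = e ↔ c ≠ 0 := by
  obtain ⟨u, hn, rfl⟩ := h
  rw [Ne, ZMod.intCast_zmod_eq_zero_iff_dvd, ← padicValInt.of_nat, hn]
  have hp : (p : ℤ) ≠ 0 := mod_cast (Fact.out : p.Prime).ne_zero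
  obtain rfl | hu := eq_or_ne u 0
  · simpa using he.symm
  have hval : padicValInt p ((p : ℤ) ^ e) = e := by
    rw [← Nat.cast_pow, padicValInt.of_nat, padicValNat.prime_pow]
  rw [padicValInt.mul (pow_ne_zero e hp) hu, hval, Nat.add_eq_left, padicValInt.eq_zero_iff]
  simp [hu, (Fact.out : p.Prime).ne_one]

end HasLeadingDigit

theorem padicValNat_two_pow_mul_of_odd (e : ℕ) {m : ℕ} (hm : Odd m) :
    padicValNat 2 (2 ^ e * m) = e := by
  rw [padicValNat.mul (by positivity) hm.pos.ne', padicValNat.prime_pow,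
    padicValNat.eq_zero_of_not_dvd hm.not_two_dvd_nat, add_zero]

theorem hasLeadingDigit_padicValNat_two {n : ℕ} (hn : n ≠ 0) :
    HasLeadingDigit 2 (padicValNat 2 n) n 1 := by
  obtain ⟨e, m, hm, rfl⟩ := Nat.exists_eq_two_pow_mul_odd hn
  rw [padicValNat_two_pow_mul_of_odd e hm]
  exact ⟨m, by push_cast; rfl, by simpa using ZMod.natCast_eq_one_iff_odd.mpr hm⟩

theorem padicValNat_add_of_lt [Fact p.Prime] {m n : ℕ} (hm : m ≠ 0) (hn : n ≠ 0)
    (h : padicValNat p m < padicValNat p n) : padicValNat p (m + n) = padicValNat p m := by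
  have hval := padicValRat.add_eq_of_lt (p := p) (q := m) (r := n) (by positivity)
    (mod_cast hm) (mod_cast hn) (by simpa using h)
  rw [← Nat.cast_add] at hval
  simpa only [padicValRat.of_nat, Nat.cast_inj] using hval

end LeadingDigit

section PairSums

open Finset

theorem sum_eq_two_mul_sum_lt_add_sum_eq {α R : Type*} [LinearOrder α] [NonAssocSemiring R]
    {s : Finset (α × α)} {f : α × α → R} (hs : ∀ x ∈ s, x.swap ∈ s)
    (hf : ∀ x ∈ s, f x.swap = f x) :
    ∑ x ∈ s, f x = 2 * ∑ x ∈ s with x.1 < x.2, f x + ∑ x ∈ s with x.1 = x.2, f x := by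
  have hswap : ∑ x ∈ s with x.2 < x.1, f x = ∑ x ∈ s with x.1 < x.2, f x :=
    sum_nbij' Prod.swap Prod.swap (by simp +contextual [hs]) (by simp +contextual [hs])
      (by simp) (by simp) fun x hx => (hf x (mem_of_mem_filter x hx)).symm
  have hge : ∑ x ∈ s with ¬x.1 < x.2, f x
      = ∑ x ∈ s with x.2 < x.1, f x + ∑ x ∈ s with x.1 = x.2, f x := by
    rw [← sum_union (disjoint_filter.mpr fun x _ hlt => hlt.ne'), ← filter_or]
    simp only [not_lt, le_iff_lt_or_eq, eq_comm]
  rw [← sum_filter_add_sum_filter_not s fun x => x.1 < x.2, hge, hswap, two_mul, add_assoc]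

theorem sum_antidiagonal_filter_lt_ite {R : Type*} [AddCommMonoidWithOne R] (p : Prop) [Decidable p]
    (m n : ℕ) :
    (∑ x ∈ antidiagonal n with x.1 < x.2, if p ∧ x.1 = m then (1 : R) else 0)
      = if p ∧ 2 * m < n then 1 else 0 := by
  split_ifs with h
  · rw [sum_eq_single (m, n - m), if_pos ⟨h.1, rfl⟩]
    · rintro ⟨i, j⟩ hx hne
      obtain ⟨rfl, -⟩ : i + j = n ∧ i < j := by simpa using hx
      refine if_neg fun ⟨_, him⟩ => hne ?_
      rw [← him, Nat.add_sub_cancel_left]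
    · intro hnot
      refine absurd (mem_filter.mpr ⟨HasAntidiagonal.mem_antidiagonal.mpr ?_, ?_⟩) hnot <;> omega
  · refine sum_eq_zero fun ⟨i, j⟩ hx => if_neg fun ⟨hp, him⟩ => h ⟨hp, ?_⟩
    have hij : i + j = n ∧ i < j := by simpa using hx
    rw [← him]
    omega

theorem sum_antidiagonal_filter_eq_const {R : Type*} [AddCommMonoid R] (n : ℕ) (c : R) :
    ∑ x ∈ antidiagonal n with x.1 = x.2, c = if Even n then c else 0 := by
  split_ifs with hn
  · obtain ⟨k, rfl⟩ := hn
    have hdiag : {x ∈ antidiagonal (k + k) | x.1 = x.2} = {(k, k)} := by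
      ext ⟨i, j⟩
      rw [mem_filter, HasAntidiagonal.mem_antidiagonal, mem_singleton, Prod.mk_inj]
      omega
    rw [hdiag, sum_singleton]
  · refine sum_eq_zero fun ⟨i, j⟩ hx => absurd ⟨i, ?_⟩ hn
    have hij : i + j = n ∧ i = j := by simpa using hx
    omega

end PairSums

section BinaryDigits

theorem s2_add_padicValNat_factorial (n : ℕ) : s2 n + padicValNat 2 n.factorial = n := by
  have h := sub_one_mul_padicValNat_factorial (p := 2) n
  have hle := Nat.digit_sum_le 2 n
  unfold s2
  omega

/-- Kummer's theorem at the prime `2`, without a truncated subtraction. -/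
theorem padicValNat_add_choose_add_s2 (i j : ℕ) :
    padicValNat 2 ((i + j).choose i) + s2 (i + j) = s2 i + s2 j := by
  have hchoose : (i + j).choose i ≠ 0 := (Nat.choose_pos (Nat.le_add_right i j)).ne'
  have h := congrArg (padicValNat 2) (Nat.choose_mul_factorial_mul_factorial (Nat.le_add_right i j))
  rw [Nat.add_sub_cancel_left,
    padicValNat.mul (mul_ne_zero hchoose i.factorial_ne_zero) j.factorial_ne_zero,
    padicValNat.mul hchoose i.factorial_ne_zero] at h
  have hi := s2_add_padicValNat_factorial i
  have hj := s2_add_padicValNat_factorial j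
  have hij := s2_add_padicValNat_factorial (i + j)
  omega

theorem s2_add_le (i j : ℕ) : s2 (i + j) ≤ s2 i + s2 j := by
  have := padicValNat_add_choose_add_s2 i j
  omega

theorem s2_two_mul (n : ℕ) : s2 (2 * n) = s2 n := by
  obtain rfl | hn := n.eq_zero_or_pos
  · rfl
  · simp [s2, Nat.digits_def' one_lt_two (Nat.mul_pos two_pos hn)]

theorem s2_two_mul_add_one (n : ℕ) : s2 (2 * n + 1) = s2 n + 1 := by
  have hmod : (2 * n + 1) % 2 = 1 := by omega
  have hdiv : (2 * n + 1) / 2 = n := by omega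
  simp only [s2, Nat.digits_def' one_lt_two (Nat.succ_pos (2 * n)), List.sum_cons, hmod, hdiv]
  exact add_comm _ _

theorem padicValNat_two_mul_choose (n : ℕ) : padicValNat 2 ((2 * n).choose n) = s2 n := by
  have h := padicValNat_add_choose_add_s2 n n
  rw [← two_mul, s2_two_mul] at h
  omega

theorem s2_two_pow_mul (a n : ℕ) : s2 (2 ^ a * n) = s2 n := by
  induction a with
  | zero => simp
  | succ a ih => rw [pow_succ', mul_assoc, s2_two_mul, ih]

theorem s2_two_pow (a : ℕ) : s2 (2 ^ a) = 1 := by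
  rw [← mul_one (2 ^ a), s2_two_pow_mul]
  simp [s2]

theorem two_pow_succ_sub_one (b : ℕ) : 2 ^ (b + 1) - 1 = 2 * (2 ^ b - 1) + 1 := by
  have := Nat.one_le_two_pow (n := b)
  omega

theorem s2_two_pow_sub_one (b : ℕ) : s2 (2 ^ b - 1) = b := by
  induction b with
  | zero => rfl
  | succ b ih => rw [two_pow_succ_sub_one, s2_two_mul_add_one, ih]

theorem s2_pos {n : ℕ} (hn : 0 < n) : 0 < s2 n := by
  obtain ⟨a, m, ⟨t, rfl⟩, rfl⟩ := Nat.exists_eq_two_pow_mul_odd hn.ne'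
  rw [s2_two_pow_mul, s2_two_mul_add_one]
  exact Nat.succ_pos _

theorem eq_two_pow_of_s2_eq_one {n : ℕ} (h : s2 n = 1) : n = 2 ^ padicValNat 2 n := by
  have hn : n ≠ 0 := by
    rintro rfl
    simp [s2] at h
  obtain ⟨a, m, hm, rfl⟩ := Nat.exists_eq_two_pow_mul_odd hn
  rw [padicValNat_two_pow_mul_of_odd a hm]
  obtain ⟨t, rfl⟩ := hm
  rw [s2_two_pow_mul, s2_two_mul_add_one, add_eq_right] at h
  obtain rfl | ht := t.eq_zero_or_pos
  · simp
  · exact absurd h (s2_pos ht).ne'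

theorem s2_add_lt_of_odd {i j : ℕ} (hi : Odd i) (hj : Odd j) : s2 (i + j) < s2 i + s2 j := by
  obtain ⟨i, rfl⟩ := hi
  obtain ⟨j, rfl⟩ := hj
  have hsum : 2 * i + 1 + (2 * j + 1) = 2 * (i + (j + 1)) := by ring
  calc s2 (2 * i + 1 + (2 * j + 1)) = s2 (i + (j + 1)) := by rw [hsum, s2_two_mul]
    _ ≤ s2 i + s2 (j + 1) := s2_add_le i (j + 1)
    _ ≤ s2 i + (s2 j + s2 1) := Nat.add_le_add_left (s2_add_le j 1) _
    _ < s2 i + 1 + (s2 j + 1) := by simp [s2]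
    _ = s2 (2 * i + 1) + s2 (2 * j + 1) := by simp only [s2_two_mul_add_one]

/-- In the binary expansion of `n` all the ones come before all the zeros. -/
def OnesBeforeZeros (n : ℕ) : Prop :=
  ∃ a b : ℕ, 0 < b ∧ n = 2 ^ a * (2 ^ b - 1)

noncomputable instance : DecidablePred OnesBeforeZeros :=
  Classical.decPred _

namespace OnesBeforeZeros

variable {i j n : ℕ}

theorem eq_two_pow_mul (hn : OnesBeforeZeros n) : n = 2 ^ padicValNat 2 n * (2 ^ s2 n - 1) := by
  obtain ⟨a, b, hb, rfl⟩ := hn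
  obtain ⟨b, rfl⟩ := Nat.exists_eq_succ_of_ne_zero hb.ne'
  rw [padicValNat_two_pow_mul_of_odd a ⟨_, two_pow_succ_sub_one b⟩, s2_two_pow_mul,
    s2_two_pow_sub_one]

theorem two_pow (a : ℕ) : OnesBeforeZeros (2 ^ a) :=
  ⟨a, 1, one_pos, by simp⟩

theorem ne_zero (hn : OnesBeforeZeros n) : n ≠ 0 := by
  obtain ⟨a, b, hb, rfl⟩ := hn
  have hlt := Nat.one_lt_two_pow hb.ne'
  exact mul_ne_zero (Nat.two_pow_pos a).ne' (by omega)

theorem of_s2_eq_one (h : s2 n = 1) : OnesBeforeZeros n :=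
  eq_two_pow_of_s2_eq_one h ▸ two_pow _

theorem two_mul_two_pow_padicValNat_lt (hn : OnesBeforeZeros n) (hs : 1 < s2 n) :
    2 * 2 ^ padicValNat 2 n < n := by
  have h4 : 2 ^ 2 ≤ 2 ^ s2 n := Nat.pow_le_pow_right two_pos hs
  calc 2 * 2 ^ padicValNat 2 n = 2 ^ padicValNat 2 n * 2 := mul_comm _ _
    _ < 2 ^ padicValNat 2 n * (2 ^ s2 n - 1) := by gcongr; omega
    _ = n := hn.eq_two_pow_mul.symm

/-- A block of two or more ones overlaps any number whose lowest one is the second of the block. -/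
theorem s2_eq_one_of_add (hi : OnesBeforeZeros i) (hj : j ≠ 0)
    (hval : padicValNat 2 j = padicValNat 2 i + 1) (hs : s2 (i + j) = s2 i + s2 j) :
    s2 i = 1 := by
  obtain ⟨e, b, hb, rfl⟩ := hi
  obtain ⟨f, m, hm, rfl⟩ := Nat.exists_eq_two_pow_mul_odd hj
  obtain ⟨b, rfl⟩ := Nat.exists_eq_succ_of_ne_zero hb.ne'
  rw [padicValNat_two_pow_mul_of_odd f hm,
    padicValNat_two_pow_mul_of_odd e ⟨_, two_pow_succ_sub_one b⟩] at hval
  subst hval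
  have hsum : 2 ^ e * (2 ^ (b + 1) - 1) + 2 ^ (e + 1) * m
      = 2 ^ e * (2 * (2 ^ b - 1 + m) + 1) := by
    rw [two_pow_succ_sub_one]
    ring
  rw [Nat.succ_eq_add_one, hsum] at hs
  simp only [s2_two_pow_mul, s2_two_mul_add_one, two_pow_succ_sub_one] at hs
  rw [s2_two_pow_mul, s2_two_pow_sub_one]
  rcases b with _ | b
  · rfl
  · have := s2_add_lt_of_odd ⟨_, two_pow_succ_sub_one b⟩ hm
    omega

theorem two_pow_add (hj : OnesBeforeZeros j) {e : ℕ} (hval : padicValNat 2 j = e + 1) :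
    OnesBeforeZeros (2 ^ e + j) := by
  refine ⟨e, s2 j + 1, Nat.succ_pos _, ?_⟩
  rw [hj.eq_two_pow_mul, hval, two_pow_succ_sub_one]
  simp only [s2_two_pow_mul, s2_two_pow_sub_one]
  ring

end OnesBeforeZeros

end BinaryDigits

section PascalProduct

/-- The product of the two entries of Pascal's triangle standing above `(i + j).choose i`, the
second of them, `(i + j - 1).choose (i - 1)`, being written as `(i + j - 1).choose j`. -/
def pascalProd (i j : ℕ) : ℕ :=
  (i + j - 1).choose i * (i + j - 1).choose j

variable {i j : ℕ}

theorem pascalProd_comm (i j : ℕ) : pascalProd i j = pascalProd j i := by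
  rw [pascalProd, pascalProd, add_comm i j, mul_comm]

theorem add_mul_choose_pred (i j : ℕ) :
    (i + j) * (i + j - 1).choose j = (i + j).choose i * i := by
  rcases i with _ | i
  · rcases j with _ | j <;> simp
  · have hpred : i + 1 + j - 1 = i + j := by omega
    rw [hpred, ← Nat.choose_symm_add, add_right_comm, Nat.add_one_mul_choose_eq]

theorem add_sq_mul_pascalProd (i j : ℕ) :
    (i + j) ^ 2 * pascalProd i j = (i + j).choose i ^ 2 * (i * j) := by
  have hi := add_mul_choose_pred i j
  have hj := add_mul_choose_pred j i
  rw [add_comm j i, ← Nat.choose_symm_add] at hj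
  calc (i + j) ^ 2 * pascalProd i j
      = ((i + j) * (i + j - 1).choose j) * ((i + j) * (i + j - 1).choose i) := by
        rw [pascalProd]
        ring
    _ = (i + j).choose i ^ 2 * (i * j) := by
        rw [hi, hj]
        ring

theorem pascalProd_pos (hi : 0 < i) (hj : 0 < j) : 0 < pascalProd i j :=
  Nat.mul_pos (Nat.choose_pos (by omega)) (Nat.choose_pos (by omega))

theorem padicValNat_pascalProd (hi : 0 < i) (hj : 0 < j) :
    padicValNat 2 (pascalProd i j) + 2 * padicValNat 2 (i + j)
      = 2 * padicValNat 2 ((i + j).choose i) + padicValNat 2 i + padicValNat 2 j := by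
  have hchoose : (i + j).choose i ≠ 0 := (Nat.choose_pos (Nat.le_add_right i j)).ne'
  have h := congrArg (padicValNat 2) (add_sq_mul_pascalProd i j)
  rw [padicValNat.mul (by positivity) (pascalProd_pos hi hj).ne', padicValNat.pow,
    padicValNat.mul (by positivity) (by positivity), padicValNat.pow,
    padicValNat.mul hi.ne' hj.ne'] at h
  omega

/-- By Pascal's rule the product has the form `a * b * (a + b)`. -/
theorem even_pascalProd_mul_choose (hi : 0 < i) : Even (pascalProd i j * (i + j).choose i) := by
  obtain ⟨i, rfl⟩ := Nat.exists_eq_succ_of_ne_zero hi.ne'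
  have hpred : i + 1 + j - 1 = i + j := by omega
  have hpascal : (i + 1 + j).choose (i + 1) = (i + j).choose j + (i + j).choose (i + 1) := by
    rw [add_right_comm, Nat.choose_succ_succ, Nat.choose_symm_add]
  rw [Nat.succ_eq_add_one, pascalProd, hpred, hpascal]
  simp only [Nat.even_mul, Nat.even_add]
  tauto

theorem one_le_padicValNat_pascalProd_add (hi : 0 < i) (hj : 0 < j) :
    1 ≤ padicValNat 2 (pascalProd i j) + padicValNat 2 ((i + j).choose i) := by
  have hpos := pascalProd_pos hi hj
  have hchoose : 0 < (i + j).choose i := Nat.choose_pos (Nat.le_add_right i j)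
  rw [← padicValNat.mul hpos.ne' hchoose.ne']
  exact one_le_padicValNat_of_dvd (Nat.mul_pos hpos hchoose).ne'
    (even_pascalProd_mul_choose hi).two_dvd

theorem eq_two_pow_of_padicValNat_pascalProd (hi : OnesBeforeZeros i) (hj : OnesBeforeZeros j)
    (hi0 : 0 < i) (hij : i < j)
    (h : padicValNat 2 (pascalProd i j) + 2 * padicValNat 2 ((i + j).choose i) = 1) :
    OnesBeforeZeros (i + j) ∧ i = 2 ^ padicValNat 2 (i + j) := by
  have hj0 := hi0.trans hij
  have hprod := padicValNat_pascalProd hi0 hj0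
  have hkummer := padicValNat_add_choose_add_s2 i j
  have hs : s2 (i + j) = s2 i + s2 j := by omega
  rcases lt_trichotomy (padicValNat 2 i) (padicValNat 2 j) with hlt | heq | hgt
  · have hval := padicValNat_add_of_lt hi0.ne' hj0.ne' hlt
    have hsucc : padicValNat 2 j = padicValNat 2 i + 1 := by omega
    have hpow := eq_two_pow_of_s2_eq_one (hi.s2_eq_one_of_add hj0.ne' hsucc hs)
    rw [hval, ← hpow]
    refine ⟨?_, rfl⟩
    rw [hpow]
    exact hj.two_pow_add hsucc
  · omega
  · exfalso
    have hval := padicValNat_add_of_lt hj0.ne' hi0.ne' hgt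
    rw [add_comm j i] at hval
    have hsucc : padicValNat 2 i = padicValNat 2 j + 1 := by omega
    have hpow := eq_two_pow_of_s2_eq_one
      (hj.s2_eq_one_of_add hi0.ne' hsucc (by rw [add_comm j i, hs, add_comm]))
    have hle : j ≤ i := by
      rw [hpow]
      exact (Nat.pow_le_pow_right two_pos hgt.le).trans
        (Nat.le_of_dvd hi0 pow_padicValNat_dvd)
    omega

theorem padicValNat_pascalProd_of_eq_two_pow (hn : OnesBeforeZeros (i + j)) (hij : i < j)
    (hi : i = 2 ^ padicValNat 2 (i + j)) :
    OnesBeforeZeros j ∧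
      padicValNat 2 (pascalProd i j) + 2 * padicValNat 2 ((i + j).choose i) = 1 := by
  have hi0 : 0 < i := hi ▸ Nat.two_pow_pos _
  have hkummer := padicValNat_add_choose_add_s2 i j
  have hprod := padicValNat_pascalProd hi0 (hi0.trans hij)
  have hcanon := hn.eq_two_pow_mul
  obtain ⟨q, hq⟩ : ∃ q, s2 (i + j) = q + 2 := by
    refine Nat.exists_eq_add_of_le' (by_contra fun hlt => ?_)
    have hs : s2 (i + j) = 1 := by have := s2_pos (hi0.trans_le (Nat.le_add_right i j)); omega
    have := eq_two_pow_of_s2_eq_one hs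
    omega
  generalize padicValNat 2 (i + j) = e at hi hprod hcanon
  have hj : j = 2 ^ (e + 1) * (2 ^ (q + 1) - 1) := by
    rw [hq, two_pow_succ_sub_one, ← hi, mul_add, mul_one, add_comm, add_left_inj] at hcanon
    rw [hcanon, pow_succ 2 e, ← hi, mul_assoc]
  have hvali : padicValNat 2 i = e := by rw [hi, padicValNat.prime_pow]
  have hvalj : padicValNat 2 j = e + 1 := by
    rw [hj, padicValNat_two_pow_mul_of_odd _ ⟨_, two_pow_succ_sub_one q⟩]
  have hsi : s2 i = 1 := by rw [hi, s2_two_pow]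
  have hsj : s2 j = q + 1 := by rw [hj, s2_two_pow_mul, s2_two_pow_sub_one]
  exact ⟨⟨e + 1, q + 1, Nat.succ_pos q, hj⟩, by omega⟩

theorem padicValNat_pascalProd_add_eq_one_iff (hi0 : 0 < i) (hij : i < j) :
    padicValNat 2 (pascalProd i j) + 2 * padicValNat 2 ((i + j).choose i) = 1 ∧
        OnesBeforeZeros i ∧ OnesBeforeZeros j ↔
      OnesBeforeZeros (i + j) ∧ i = 2 ^ padicValNat 2 (i + j) := by
  refine ⟨fun ⟨hval, hi, hj⟩ => eq_two_pow_of_padicValNat_pascalProd hi hj hi0 hij hval,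
    fun ⟨hn, hi⟩ => ?_⟩
  obtain ⟨hj, hval⟩ := padicValNat_pascalProd_of_eq_two_pow hn hij hi
  exact ⟨hval, hi ▸ .two_pow _, hj⟩

end PascalProduct

section DoubleEGF

open PowerSeries Finset
open scoped Nat

/-- The Euler operator `X d/dX` on power series. -/
noncomputable def eulerDerivation (R : Type*) [CommRing R] : Derivation R R⟦X⟧ R⟦X⟧ :=
  (X : R⟦X⟧) • d⁄dX R

theorem coeff_eulerDerivation {R : Type*} [CommRing R] (f : R⟦X⟧) (n : ℕ) :
    coeff n (eulerDerivation R f) = n * coeff n f := by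
  rcases n with _ | n
  · simp [eulerDerivation]
  · simp [eulerDerivation, coeff_succ_X_mul, coeff_derivative, mul_comm]

variable {K : Type*} [Field K]

theorem eq_zero_of_eulerDerivation_eq_mul [CharZero K] {f g : K⟦X⟧}
    (hf : constantCoeff f = 0) (hg : constantCoeff g = 0)
    (h : eulerDerivation K f = g * f) : f = 0 := by
  ext n
  induction n using Nat.strong_induction_on with
  | _ n ih =>
    rw [map_zero]
    rcases n.eq_zero_or_pos with rfl | hn
    · simpa using hf
    have hcoeff := congrArg (coeff n) h
    rw [coeff_eulerDerivation, coeff_mul, sum_eq_zero] at hcoeff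
    · exact (mul_eq_zero.mp hcoeff).resolve_left (mod_cast hn.ne')
    rintro ⟨i, j⟩ hij
    rw [HasAntidiagonal.mem_antidiagonal] at hij
    rcases i.eq_zero_or_pos with rfl | hi
    · simp [hg]
    · rw [ih j (by omega), map_zero, mul_zero]

/-- The doubly exponential generating function `∑ aₙ Xⁿ / (n!)²`. -/
noncomputable def doubleEGF (a : ℕ → K) : K⟦X⟧ :=
  .mk fun n => a n / (n ! : K) ^ 2

@[simp]
theorem coeff_doubleEGF (a : ℕ → K) (n : ℕ) : coeff n (doubleEGF a) = a n / (n ! : K) ^ 2 :=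
  coeff_mk n _

theorem eulerDerivation_doubleEGF (a : ℕ → K) :
    eulerDerivation K (doubleEGF a) = doubleEGF fun n => n * a n := by
  ext n
  simp only [coeff_eulerDerivation, coeff_doubleEGF, mul_div_assoc]

variable [CharZero K]

theorem doubleEGF_mul (a b : ℕ → K) :
    doubleEGF a * doubleEGF b
      = doubleEGF fun n => ∑ x ∈ antidiagonal n, (n.choose x.1 : K) ^ 2 * (a x.1 * b x.2) := by
  ext n
  rw [coeff_mul, coeff_doubleEGF, sum_div]
  refine sum_congr rfl fun ⟨i, j⟩ hij => ?_
  obtain rfl := mem_antidiagonal.mp hij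
  have hchoose : ((i + j).choose i : K) * i ! * j ! = (i + j)! := by
    have := Nat.choose_mul_factorial_mul_factorial (Nat.le_add_right i j)
    rw [Nat.add_sub_cancel_left] at this
    exact_mod_cast this
  have hi : (i ! : K) ≠ 0 := mod_cast i.factorial_ne_zero
  have hj : (j ! : K) ≠ 0 := mod_cast j.factorial_ne_zero
  have hij : (((i + j)! : ℕ) : K) ≠ 0 := mod_cast (i + j).factorial_ne_zero
  simp only [coeff_doubleEGF]
  field_simp
  rw [← hchoose]
  ring

theorem eulerDerivation_eulerDerivation_doubleEGF_one :
    eulerDerivation K (eulerDerivation K (doubleEGF 1)) = X * doubleEGF 1 := by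
  ext n
  rcases n with _ | n
  · simp [coeff_eulerDerivation]
  have hn : (n + 1 : K) ≠ 0 := mod_cast n.succ_ne_zero
  have hfact : (n ! : K) ≠ 0 := mod_cast n.factorial_ne_zero
  simp only [coeff_eulerDerivation, coeff_succ_X_mul, coeff_doubleEGF, Pi.one_apply,
    Nat.factorial_succ]
  push_cast
  field_simp

theorem multinomial_univ_div_factorial {ι : Type*} [Fintype ι] (x : ι → ℕ) :
    (Nat.multinomial univ x : K) / (∑ i, x i)! = ∏ i, 1 / ((x i)! : K) := by
  have hspec := congrArg (Nat.cast (R := K)) (Nat.multinomial_spec univ x)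
  have hfact : (((∑ i, x i)! : ℕ) : K) ≠ 0 := mod_cast Nat.factorial_ne_zero _
  have hprod : ∏ i, ((x i)! : K) ≠ 0 :=
    prod_ne_zero_iff.mpr fun i _ => mod_cast (x i).factorial_ne_zero
  push_cast at hspec
  rw [prod_div_distrib, prod_const_one, div_eq_div_iff hfact hprod, ← hspec]
  ring

theorem doubleEGF_one_pow (d : ℕ) :
    doubleEGF (1 : ℕ → K) ^ d = doubleEGF fun n => (Wstar d n : K) := by
  have hpow : doubleEGF (1 : ℕ → K) ^ d = ∏ _i : Fin d, doubleEGF 1 := by simp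
  ext n
  rw [hpow, coeff_prod, coeff_doubleEGF, Wstar, Nat.cast_sum, sum_div]
  refine sum_bij' (fun x _ => ⇑x) (fun x _ => Finsupp.equivFunOnFinite.symm x)
    ?_ ?_ (fun _ _ => by simp) (fun _ _ => by simp) fun x hx => ?_
  · simp [Nat.mem_antidiagonalTuple]
  · simp [Nat.mem_antidiagonalTuple]
  have hsum : ∑ i, x i = n := by simpa using hx
  rw [Nat.cast_pow, ← div_pow, ← hsum, multinomial_univ_div_factorial, ← prod_pow]
  simp

end DoubleEGF

section BesselLogCoeff

open Finset

/-- Carlitz's integers, the coefficients of `log I = ∑ besselLogCoeff n Xⁿ / (n!)²` for the Bessel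
function `I = I₀(2√X) = ∑ Xⁿ / (n!)²`. They are defined by the recursion which the Riccati equation
for the logarithmic derivative of `I` imposes on them. -/
def besselLogCoeff : ℕ → ℤ
  | 0 => 0
  | 1 => 1
  | n + 2 => -∑ k : Fin (n + 1), (pascalProd (k + 1) (n - k + 1) : ℤ) *
      (besselLogCoeff (k + 1) * besselLogCoeff (n - k + 1))

theorem besselLogCoeff_zero : besselLogCoeff 0 = 0 := by
  rw [besselLogCoeff]

theorem besselLogCoeff_one : besselLogCoeff 1 = 1 := by
  rw [besselLogCoeff]

theorem besselLogCoeff_add_sum_antidiagonal (n : ℕ) :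
    besselLogCoeff n + ∑ x ∈ antidiagonal n,
        (pascalProd x.1 x.2 : ℤ) * (besselLogCoeff x.1 * besselLogCoeff x.2)
      = if n = 1 then 1 else 0 := by
  rcases n with _ | _ | n
  · simp [besselLogCoeff_zero]
  · simp [besselLogCoeff_one, besselLogCoeff_zero, Nat.sum_antidiagonal_succ]
  rw [besselLogCoeff, Nat.sum_antidiagonal_succ, Nat.sum_antidiagonal_succ',
    Nat.sum_antidiagonal_eq_sum_range_succ_mk, Finset.sum_range]
  simp [besselLogCoeff_zero]

theorem besselLogCoeff_eq_neg_sum {n : ℕ} (hn : n ≠ 1) :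
    besselLogCoeff n = -∑ x ∈ antidiagonal n,
      (pascalProd x.1 x.2 : ℤ) * (besselLogCoeff x.1 * besselLogCoeff x.2) :=
  eq_neg_of_add_eq_zero_left (by rw [besselLogCoeff_add_sum_antidiagonal, if_neg hn])

variable (K : Type*) [Field K]

/-- The logarithmic derivative of `∑ Xⁿ / (n!)²` with respect to the Euler operator `X d/dX`. -/
noncomputable def besselLogDeriv : PowerSeries K :=
  doubleEGF fun n => (n * besselLogCoeff n : K)

theorem constantCoeff_besselLogDeriv : PowerSeries.constantCoeff (besselLogDeriv K) = 0 := by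
  rw [← PowerSeries.coeff_zero_eq_constantCoeff_apply, besselLogDeriv, coeff_doubleEGF]
  simp

variable [CharZero K]

theorem riccati_besselLogDeriv :
    eulerDerivation K (besselLogDeriv K) + besselLogDeriv K * besselLogDeriv K
      = PowerSeries.X := by
  have hcoeff (n : ℕ) : (n * (n * besselLogCoeff n) : K) + ∑ x ∈ antidiagonal n,
      (n.choose x.1 : K) ^ 2 * (x.1 * besselLogCoeff x.1 * (x.2 * besselLogCoeff x.2))
        = if n = 1 then 1 else 0 := by
    have hpascal : ∀ x ∈ antidiagonal n,
        (n.choose x.1 : K) ^ 2 * (x.1 * besselLogCoeff x.1 * (x.2 * besselLogCoeff x.2))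
          = n ^ 2 * (pascalProd x.1 x.2 * (besselLogCoeff x.1 * besselLogCoeff x.2)) := by
      rintro ⟨i, j⟩ hij
      obtain rfl := HasAntidiagonal.mem_antidiagonal.mp hij
      have h := congrArg (Nat.cast (R := K)) (add_sq_mul_pascalProd i j)
      push_cast at h ⊢
      linear_combination (-(besselLogCoeff i * besselLogCoeff j : K)) * h
    have hrec := congrArg (Int.cast (R := K)) (besselLogCoeff_add_sum_antidiagonal n)
    push_cast at hrec
    rw [sum_congr rfl hpascal, ← mul_sum, ← mul_assoc, ← sq, ← mul_add, hrec]
    split_ifs with hn <;> simp [hn]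
  rw [besselLogDeriv, eulerDerivation_doubleEGF, doubleEGF_mul]
  ext n
  rw [map_add, coeff_doubleEGF, coeff_doubleEGF, ← add_div, hcoeff, PowerSeries.coeff_X]
  split_ifs with hn <;> simp [hn]

theorem eulerDerivation_doubleEGF_one :
    eulerDerivation K (doubleEGF 1) = besselLogDeriv K * doubleEGF 1 := by
  have hbessel := eulerDerivation_eulerDerivation_doubleEGF_one (K := K)
  have hriccati := riccati_besselLogDeriv K
  have hzero := constantCoeff_besselLogDeriv K
  -- The difference `E` of the two sides satisfies `θ E = -besselLogDeriv K * E`.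
  refine sub_eq_zero.mp (eq_zero_of_eulerDerivation_eq_mul (g := -besselLogDeriv K) ?_ ?_ ?_)
  · simp [eulerDerivation, hzero]
  · rw [map_neg, hzero, neg_zero]
  · rw [map_sub, Derivation.leibniz, hbessel, smul_eq_mul, smul_eq_mul]
    linear_combination (-doubleEGF 1) * hriccati

theorem eulerDerivation_doubleEGF_one_pow (d : ℕ) :
    eulerDerivation K (doubleEGF 1 ^ d) = d • (besselLogDeriv K * doubleEGF 1 ^ d) := by
  rcases d with _ | d
  · simp
  · rw [Derivation.leibniz_pow, eulerDerivation_doubleEGF_one, Nat.add_sub_cancel]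
    congr 1
    rw [smul_eq_mul]
    ring

end BesselLogCoeff

section WstarRecurrence

open Finset

theorem Wstar_zero (d : ℕ) : Wstar d 0 = 1 := by
  simp [Wstar, Nat.antidiagonalTuple_zero_right, Nat.multinomial]

theorem Wstar_eq_mul_sum (d : ℕ) {n : ℕ} (hn : 0 < n) :
    (Wstar d n : ℤ) = d * ∑ x ∈ antidiagonal n,
      (n.choose x.1 : ℤ) * (n - 1).choose x.2 * (besselLogCoeff x.1 * Wstar d x.2) := by
  have hcoeff := congrArg (PowerSeries.coeff n) (eulerDerivation_doubleEGF_one_pow ℚ d)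
  rw [doubleEGF_one_pow, eulerDerivation_doubleEGF, besselLogDeriv, doubleEGF_mul,
    map_nsmul, nsmul_eq_mul, coeff_doubleEGF, coeff_doubleEGF] at hcoeff
  have hfact : (n.factorial : ℚ) ≠ 0 := mod_cast n.factorial_ne_zero
  have hn0 : (n : ℚ) ≠ 0 := mod_cast hn.ne'
  have habsorb : ∀ x ∈ antidiagonal n,
      (n.choose x.1 : ℚ) ^ 2 * (x.1 * besselLogCoeff x.1 * Wstar d x.2)
        = n * ((n.choose x.1 : ℚ) * (n - 1).choose x.2 * (besselLogCoeff x.1 * Wstar d x.2)) := by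
    rintro ⟨i, j⟩ hij
    obtain rfl := HasAntidiagonal.mem_antidiagonal.mp hij
    have h := congrArg (Nat.cast (R := ℚ)) (add_mul_choose_pred i j)
    push_cast at h ⊢
    linear_combination (-((i + j).choose i * (besselLogCoeff i * Wstar d j) : ℚ)) * h
  rw [sum_congr rfl habsorb, ← mul_sum] at hcoeff
  qify
  refine mul_left_cancel₀ (div_ne_zero hn0 (pow_ne_zero 2 hfact)) ?_
  linear_combination hcoeff

end WstarRecurrence

section Valuation

open Finset

variable {i j k n : ℕ} {a b : ℤ}

theorem hasLeadingDigit_two_mul_pascalProd_mul (hi : 0 < i) (hij : i < j)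
    (ha : HasLeadingDigit 2 (2 * s2 i - 2) a (if OnesBeforeZeros i then 1 else 0))
    (hb : HasLeadingDigit 2 (2 * s2 j - 2) b (if OnesBeforeZeros j then 1 else 0)) :
    HasLeadingDigit 2 (2 * s2 (i + j) - 2) (2 * (pascalProd i j * (a * b)))
      (if OnesBeforeZeros (i + j) ∧ i = 2 ^ padicValNat 2 (i + j) then 1 else 0) := by
  have hj := hi.trans hij
  have htwo : HasLeadingDigit 2 1 2 1 := ⟨1, by norm_num, by simp⟩
  have hprod := htwo.mul
    ((hasLeadingDigit_padicValNat_two (pascalProd_pos hi hj).ne').mul (ha.mul hb))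
  have hcarry := one_le_padicValNat_pascalProd_add hi hj
  have hkummer := padicValNat_add_choose_add_s2 i j
  have hsi := s2_pos hi
  have hsj := s2_pos hj
  have hsij := s2_pos (Nat.add_pos_left hi j)
  convert hprod.of_le (f := 2 * s2 (i + j) - 2) (by omega) using 1
  have hexp : 1 + (padicValNat 2 (pascalProd i j) + (2 * s2 i - 2 + (2 * s2 j - 2)))
      = 2 * s2 (i + j) - 2 ↔
        padicValNat 2 (pascalProd i j) + 2 * padicValNat 2 ((i + j).choose i) = 1 := by omega
  simp only [← padicValNat_pascalProd_add_eq_one_iff hi hij, hexp, ite_and]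
  split_ifs <;> rfl

theorem padicValNat_pascalProd_self (hk : 0 < k) :
    padicValNat 2 (pascalProd k k) + 2 = 2 * s2 k := by
  have hval := padicValNat_pascalProd hk hk
  rw [← two_mul, padicValNat_two_mul_choose, padicValNat.mul two_ne_zero hk.ne',
    padicValNat_self] at hval
  omega

theorem hasLeadingDigit_pascalProd_self_mul (hk : 0 < k)
    (ha : HasLeadingDigit 2 (2 * s2 k - 2) a (if OnesBeforeZeros k then 1 else 0)) :
    HasLeadingDigit 2 (2 * s2 (k + k) - 2) (pascalProd k k * (a * a))
      (if s2 (k + k) = 1 then 1 else 0) := by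
  have hprod := (hasLeadingDigit_padicValNat_two (pascalProd_pos hk hk).ne').mul (ha.mul ha)
  have hval := padicValNat_pascalProd_self hk
  rw [← two_mul, s2_two_mul]
  convert hprod.of_le (f := 2 * s2 k - 2) (by omega) using 1
  have hexp : padicValNat 2 (pascalProd k k) + (2 * s2 k - 2 + (2 * s2 k - 2)) = 2 * s2 k - 2 ↔
      s2 k = 1 := by omega
  simp only [hexp]
  split_ifs with hone hblock
  · rfl
  · exact absurd (.of_s2_eq_one hone) hblock
  · rfl

theorem ite_onesBeforeZeros_eq_neg_add (hn : 1 < n) :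
    (if OnesBeforeZeros n then 1 else 0 : ZMod 2) =
      -((if OnesBeforeZeros n ∧ 2 * 2 ^ padicValNat 2 n < n then 1 else 0) +
        if Even n then if s2 n = 1 then 1 else 0 else 0) := by
  by_cases hs : s2 n = 1
  · have hpow := eq_two_pow_of_s2_eq_one hs
    have heven : Even n := by
      rw [hpow, Nat.even_pow]
      refine ⟨even_two, fun hzero => ?_⟩
      rw [hzero, pow_zero] at hpow
      omega
    have hlt : ¬2 * 2 ^ padicValNat 2 n < n := by omega
    simp only [OnesBeforeZeros.of_s2_eq_one hs, hlt, heven, hs, if_true, and_false, if_false]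
    decide
  · have hpos := s2_pos (zero_lt_one.trans hn)
    have hlt (h : OnesBeforeZeros n) : 2 * 2 ^ padicValNat 2 n < n :=
      h.two_mul_two_pow_padicValNat_lt (by omega)
    simp only [hs, if_false, ite_self, add_zero, and_iff_left_of_imp hlt, ZMod.neg_eq_self_mod_two]

theorem hasLeadingDigit_besselLogCoeff (n : ℕ) :
    HasLeadingDigit 2 (2 * s2 n - 2) (besselLogCoeff n) (if OnesBeforeZeros n then 1 else 0) := by
  induction n using Nat.strong_induction_on with
  | _ n ih =>
  obtain rfl | rfl | hn : n = 0 ∨ n = 1 ∨ 1 < n := by omega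
  · have hblock : ¬OnesBeforeZeros 0 := fun h => h.ne_zero rfl
    rw [besselLogCoeff_zero, if_neg hblock]
    exact .zero 2 _
  · rw [besselLogCoeff_one, if_pos (.two_pow 0)]
    exact ⟨1, by simp [s2], by simp⟩
  have hlt : ∀ x ∈ {x ∈ antidiagonal n | x.1 < x.2},
      HasLeadingDigit 2 (2 * s2 n - 2)
        (2 * (pascalProd x.1 x.2 * (besselLogCoeff x.1 * besselLogCoeff x.2)))
        (if OnesBeforeZeros n ∧ x.1 = 2 ^ padicValNat 2 n then 1 else 0) := by
    rintro ⟨i, j⟩ hx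
    obtain ⟨rfl, hij⟩ : i + j = n ∧ i < j := by simpa using hx
    rcases i.eq_zero_or_pos with rfl | hi
    · rw [if_neg fun h => (Nat.two_pow_pos _).ne h.2, besselLogCoeff_zero]
      simpa using HasLeadingDigit.zero 2 (2 * s2 (0 + j) - 2)
    · exact hasLeadingDigit_two_mul_pascalProd_mul hi hij (ih i (by omega)) (ih j (by omega))
  have heq : ∀ x ∈ {x ∈ antidiagonal n | x.1 = x.2},
      HasLeadingDigit 2 (2 * s2 n - 2)
        (pascalProd x.1 x.2 * (besselLogCoeff x.1 * besselLogCoeff x.2))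
        (if s2 n = 1 then 1 else 0) := by
    rintro ⟨k, l⟩ hx
    obtain ⟨rfl, rfl⟩ : k + l = n ∧ k = l := by simpa using hx
    exact hasLeadingDigit_pascalProd_self_mul (by omega) (ih k (by omega))
  rw [besselLogCoeff_eq_neg_sum hn.ne', sum_eq_two_mul_sum_lt_add_sum_eq (by simp [add_comm])
    (fun x _ => by simp only [Prod.fst_swap, Prod.snd_swap, pascalProd_comm, mul_comm]), mul_sum,
    ite_onesBeforeZeros_eq_neg_add hn, ← sum_antidiagonal_filter_lt_ite,
    ← sum_antidiagonal_filter_eq_const]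
  exact ((HasLeadingDigit.sum hlt).add (HasLeadingDigit.sum heq)).neg

theorem hasLeadingDigit_choose_mul_choose_pred_mul {e : ℕ} {c c' : ZMod 2} (he : 0 < e)
    (hi : 0 < i) (ha : HasLeadingDigit 2 (2 * s2 i - 2) a c)
    (hb : HasLeadingDigit 2 (2 * s2 j + e) b c') :
    HasLeadingDigit 2 (2 * s2 (i + j) - 2)
      ((i + j).choose i * (i + j - 1).choose j * (a * b)) 0 := by
  have hchoose : (i + j).choose i ≠ 0 := (Nat.choose_pos (Nat.le_add_right i j)).ne'
  have hpred : (i + j - 1).choose j ≠ 0 := (Nat.choose_pos (by omega)).ne'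
  have hprod := ((hasLeadingDigit_padicValNat_two hchoose).mul
    (hasLeadingDigit_padicValNat_two hpred)).mul (ha.mul hb)
  have hkummer := padicValNat_add_choose_add_s2 i j
  have hsi := s2_pos hi
  have hlow := hprod.of_le (f := 2 * s2 (i + j) - 2) (by omega)
  rwa [if_neg (by omega)] at hlow

theorem hasLeadingDigit_Wstar {d : ℕ} (hd : 3 ≤ padicValNat 2 d) (n : ℕ) (hn : 0 < n) :
    HasLeadingDigit 2 (2 * s2 n + (padicValNat 2 d - 2)) (Wstar d n)
      (if OnesBeforeZeros n then 1 else 0) := by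
  induction n using Nat.strong_induction_on with
  | _ n ih =>
  have hterm : ∀ x ∈ antidiagonal n, HasLeadingDigit 2 (2 * s2 n - 2)
      (n.choose x.1 * (n - 1).choose x.2 * (besselLogCoeff x.1 * Wstar d x.2))
      (if x = (n, 0) then if OnesBeforeZeros n then 1 else 0 else 0) := by
    rintro ⟨i, j⟩ hij
    obtain rfl := HasAntidiagonal.mem_antidiagonal.mp hij
    rcases i.eq_zero_or_pos with rfl | hi
    · rw [besselLogCoeff_zero, zero_mul, mul_zero, if_neg fun h => hn.ne (congrArg Prod.fst h)]
      exact .zero 2 _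
    rcases j.eq_zero_or_pos with rfl | hj
    · simpa [Wstar_zero] using hasLeadingDigit_besselLogCoeff i
    rw [if_neg fun h => hj.ne' (congrArg Prod.snd h)]
    exact hasLeadingDigit_choose_mul_choose_pred_mul (by omega) hi
      (hasLeadingDigit_besselLogCoeff i) (ih j (by omega) hj)
  have hd0 : d ≠ 0 := by
    rintro rfl
    simp at hd
  have hs := s2_pos hn
  have hprod := (hasLeadingDigit_padicValNat_two hd0).mul (HasLeadingDigit.sum hterm)
  rw [Wstar_eq_mul_sum d hn]
  convert hprod using 1
  · omega
  · simp

end Valuation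

theorem stmt_5 (d n : ℕ) (hd : 0 < d) (hd2 : 3 ≤ padicValNat 2 d) (hn : 0 < n) :
    padicValNat 2 (W d n) = 3 * s2 n + (padicValNat 2 d - 2) ↔
      ∃ a b : ℕ, 0 < b ∧ n = 2 ^ a * (2 ^ b - 1) := by
  have hchoose : (2 * n).choose n ≠ 0 := (Nat.choose_pos (by omega)).ne'
  have hW : HasLeadingDigit 2 (3 * s2 n + (padicValNat 2 d - 2)) (W d n : ℕ)
      (if OnesBeforeZeros n then 1 else 0) := by
    have hprod := (hasLeadingDigit_padicValNat_two hchoose).mul (hasLeadingDigit_Wstar hd2 n hn)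
    rw [padicValNat_two_mul_choose, one_mul, ← Nat.cast_mul, ← W] at hprod
    convert hprod using 1
    ring
  rw [hW.padicValNat_eq_iff (by omega), ite_ne_right_iff]
  exact and_iff_left one_ne_zero
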